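/- (Proposition 4.2, stated with q replaced by q^2 to avoid half-integer powers.) Let q be a complex number with 0 < |q| < 1, and let k and i be positive integers with 1 ≤ i ≤ k, k ≥ 2. Then ∑_{s_1 ≥ s_2 ≥ ⋯ ≥ s_{k-1} ≥ 0} q^{2(s_1^2 + ⋯ + s_{k-1}^2) - (s_i + ⋯ + s_{k-1})} / [(q^2;q^2)_{s_1-s_2} ⋯ (q^2;q^2)_{s_{k-2}-s_{k-1}} (q;q)_{2 s_{k-1}}] = (q^{4i}, -q^{2i-1}, -q^{2i+1}; q^{4i})_∞ / (q^2;q^2)_∞, where the linear term s_i + ⋯ + s_{k-1} is empty (equal to 0) when i = k. -/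

import Mathlib

/-- The finite q-Pochhammer symbol `(x;q)_n = ∏_{j=0}^{n-1} (1 - x q^j)`. -/
noncomputable def qPoch (x q : ℂ) (n : ℕ) : ℂ := ∏ j ∈ Finset.range n, (1 - x * q ^ j)

/-- The infinite q-Pochhammer symbol `(x;q)_∞ = ∏_{j=0}^{∞} (1 - x q^j)`. -/
noncomputable def qPochInf (x q : ℂ) : ℂ := ∏' j : ℕ, (1 - x * q ^ j)

open Filter Topology

/-!
Put `Q = q²` and `β_c(n) = ∑_m q^(2cm²+m) / ((Q;Q)_{n-m} (Q;Q)_{n+m})`. By Bailey's lemma the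
convolution of `Q^(r²) β_c(r)` with `1 / (Q;Q)_r` is `β_{c+1}`. Evaluating the Rogers–Szegő sum
`β_0(n) = q^(-n) / (q;q)_{2n}` gives `β_1(n) = 1 / (q;q)_{2n}`, a function which the perturbed
weight `q^(2r²-r)` reproduces. Summing the chain from its smallest variable upwards, we therefore
stay at `β_1` through the `k - i` perturbed variables, and the other `i - 1` variables lead to
`β_i`. Letting the upper end of the chain tend to infinity leaves the theta series `∑_m q^(2im²+m)`
divided by `(Q;Q)_∞`, and the Jacobi triple product with base `q^(4i)` evaluates it.
-/

section Pochhammer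

variable {q : ℂ}

theorem not_isOfFinOrder_of_norm_lt_one {K : Type*} [NormedDivisionRing K] {x : K}
    (hx : ‖x‖ < 1) : ¬IsOfFinOrder x :=
  fun h ↦ hx.ne h.norm_eq_one

theorem not_isOfFinOrder_pow {M : Type*} [Monoid M] {x : M} (hx : ¬IsOfFinOrder x) {n : ℕ}
    (hn : n ≠ 0) : ¬IsOfFinOrder (x ^ n) :=
  fun h ↦ hx (h.of_pow hn)

theorem one_sub_pow_ne_zero {R : Type*} [Ring R] {x : R} (hx : ¬IsOfFinOrder x) {n : ℕ}
    (hn : 0 < n) : 1 - x ^ n ≠ 0 :=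
  fun h ↦ hx (isOfFinOrder_iff_pow_eq_one.2 ⟨n, hn, (sub_eq_zero.1 h).symm⟩)

theorem norm_pow_lt_one {K : Type*} [NormedDivisionRing K] {x : K} (hx : ‖x‖ < 1) {n : ℕ}
    (hn : n ≠ 0) : ‖x ^ n‖ < 1 := by
  simpa only [norm_pow] using pow_lt_one₀ (norm_nonneg x) hx hn

theorem zpow_two_mul_natCast_add_one {G₀ : Type*} [GroupWithZero G₀] (x : G₀) (n : ℕ) :
    x ^ (2 * (n : ℤ) + 1) = x * (x ^ 2) ^ n := by
  rw [← pow_mul, ← pow_succ']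
  exact mod_cast rfl

theorem qPoch_succ (x q : ℂ) (n : ℕ) : qPoch x q (n + 1) = qPoch x q n * (1 - x * q ^ n) :=
  Finset.prod_range_succ _ n

theorem summable_norm_neg_mul_pow (x : ℂ) (hq : ‖q‖ < 1) :
    Summable fun j : ℕ ↦ ‖-(x * q ^ j)‖ := by
  simpa only [norm_neg, norm_mul, norm_pow] using
    (summable_geometric_of_lt_one (norm_nonneg q) hq).mul_left ‖x‖

theorem tendsto_qPoch (x : ℂ) (hq : ‖q‖ < 1) :
    Tendsto (qPoch x q) atTop (𝓝 (qPochInf x q)) := by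
  have h := (multipliable_one_add_of_summable
    (summable_norm_neg_mul_pow x hq)).tendsto_prod_tprod_nat
  simp only [← sub_eq_add_neg] at h
  exact h

theorem qPochInf_self_ne_zero (hq : ‖q‖ < 1) : qPochInf q q ≠ 0 := by
  have hfactor (j : ℕ) : 1 + -(q * q ^ j) ≠ 0 := by
    simpa only [← sub_eq_add_neg, pow_succ'] using
      one_sub_pow_ne_zero (not_isOfFinOrder_of_norm_lt_one hq) j.succ_pos
  have h := tprod_one_add_ne_zero_of_summable hfactor (summable_norm_neg_mul_pow q hq)
  simp only [← sub_eq_add_neg] at h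
  exact h

end Pochhammer

/-- The reciprocal `1 / (q;q)_z`, extended by zero to negative `z`, so that the finite sums of
the `q`-calculus become sums over all of `ℤ` without boundary terms. -/
noncomputable def invQFactorial (q : ℂ) (z : ℤ) : ℂ :=
  if 0 ≤ z then (qPoch q q z.toNat)⁻¹ else 0

section InvQFactorial

variable {q : ℂ}

theorem invQFactorial_natCast (q : ℂ) (n : ℕ) : invQFactorial q n = (qPoch q q n)⁻¹ := by
  simp [invQFactorial]

theorem invQFactorial_of_neg (q : ℂ) {z : ℤ} (hz : z < 0) : invQFactorial q z = 0 :=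
  if_neg hz.not_ge

theorem invQFactorial_zero (q : ℂ) : invQFactorial q 0 = 1 := by
  simp [invQFactorial, qPoch]

theorem one_sub_zpow_mul_invQFactorial (hq : ¬IsOfFinOrder q) (z : ℤ) :
    (1 - q ^ z) * invQFactorial q z = invQFactorial q (z - 1) := by
  rcases lt_trichotomy z 0 with hz | rfl | hz
  · rw [invQFactorial_of_neg q hz, invQFactorial_of_neg q (by lia), mul_zero]
  · rw [zpow_zero, sub_self, zero_mul, invQFactorial_of_neg q (by lia)]
  · obtain ⟨n, rfl⟩ : ∃ n : ℕ, z = (n + 1 : ℕ) := ⟨z.toNat - 1, by lia⟩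
    have hn : 1 - q ^ (n + 1) ≠ 0 := one_sub_pow_ne_zero hq n.succ_pos
    rw [Nat.cast_succ, add_sub_cancel_right, ← Nat.cast_succ, invQFactorial_natCast,
      invQFactorial_natCast, qPoch_succ, zpow_natCast, ← pow_succ', mul_inv_rev,
      mul_inv_cancel_left₀ hn]

theorem eq_zero_of_neg_of_mul_eq_sub_one {R : Type*} [MulZeroClass R] {c g : ℤ → R} (hc : c 0 = 0)
    (hg : ∀ z, c z * g z = g (z - 1)) {z : ℤ} (hz : z < 0) : g z = 0 := by
  induction z, Int.le_sub_one_of_lt hz using Int.leInductionDown with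
  | base => rw [← hg, hc, zero_mul]
  | pred z hz' ih => rw [← hg, ih (by lia), mul_zero]

theorem eq_mul_invQFactorial (hq : ¬IsOfFinOrder q) {g : ℤ → ℂ}
    (hg : ∀ z, (1 - q ^ z) * g z = g (z - 1)) (z : ℤ) : g z = g 0 * invQFactorial q z := by
  rcases lt_or_ge z 0 with hz | hz
  · rw [eq_zero_of_neg_of_mul_eq_sub_one (by simp) hg hz, invQFactorial_of_neg q hz, mul_zero]
  lift z to ℕ using hz
  induction z with
  | zero => simp [invQFactorial_zero]
  | succ n ih =>
    have hn : 1 - q ^ ((n + 1 : ℕ) : ℤ) ≠ 0 := by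
      simpa only [zpow_natCast] using one_sub_pow_ne_zero hq n.succ_pos
    have hpred : ((n + 1 : ℕ) : ℤ) - 1 = n := by simp
    apply mul_left_cancel₀ hn
    rw [hg, mul_left_comm, one_sub_zpow_mul_invQFactorial hq, hpred, ih]

theorem tendsto_invQFactorial (hq : ‖q‖ < 1) :
    Tendsto (invQFactorial q) atTop (𝓝 (qPochInf q q)⁻¹) := by
  have htoNat : Tendsto Int.toNat atTop atTop :=
    tendsto_atTop.2 fun b ↦ (eventually_ge_atTop (b : ℤ)).mono fun z hz ↦ by lia
  refine (((tendsto_qPoch q hq).inv₀ (qPochInf_self_ne_zero hq)).comp htoNat).congr' ?_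
  filter_upwards [eventually_ge_atTop 0] with z hz
  exact (if_pos hz).symm

theorem exists_norm_invQFactorial_le (hq : ‖q‖ < 1) :
    ∃ K : ℝ, ∀ z, ‖invQFactorial q z‖ ≤ K := by
  obtain ⟨K, hK⟩ :=
    ((tendsto_invQFactorial hq).comp tendsto_natCast_atTop_atTop).norm.bddAbove_range
  have hnat (n : ℕ) : ‖invQFactorial q n‖ ≤ K := hK ⟨n, rfl⟩
  refine ⟨K, fun z ↦ ?_⟩
  rcases lt_or_ge z 0 with hz | hz
  · simpa only [invQFactorial_of_neg q hz, norm_zero] using (norm_nonneg _).trans (hnat 0)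
  · lift z to ℕ using hz
    exact hnat z

end InvQFactorial

/-- The convolution `∑_r F(r) / (q;q)_{n-r}` of a function with the reciprocal `q`-factorials: one
step of the Bailey chain, and one layer of the multisum. -/
noncomputable def qConv (q : ℂ) (F : ℤ → ℂ) (n : ℤ) : ℂ :=
  ∑' r : ℤ, invQFactorial q (n - r) * F r

section QConv

variable {q : ℂ} {F : ℤ → ℂ} {c : ℤ}

theorem summable_qConv (q : ℂ) (hF : ∀ r < c, F r = 0) (n : ℤ) :
    Summable fun r ↦ invQFactorial q (n - r) * F r := by
  refine summable_of_ne_finset_zero (s := Finset.Icc c n) fun r hr ↦ ?_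
  rcases lt_or_ge r c with hrc | hrc
  · rw [hF r hrc, mul_zero]
  · rw [invQFactorial_of_neg q (by rw [Finset.mem_Icc] at hr; lia), zero_mul]

theorem qConv_of_lt (q : ℂ) (hF : ∀ r < c, F r = 0) {n : ℤ} (hn : n < c) : qConv q F n = 0 := by
  refine (tsum_congr fun r ↦ ?_).trans tsum_zero
  rcases lt_or_ge r c with hrc | hrc
  · rw [hF r hrc, mul_zero]
  · rw [invQFactorial_of_neg q (by lia), zero_mul]

theorem qConv_self (q : ℂ) (hF : ∀ r < c, F r = 0) : qConv q F c = F c := by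
  rw [qConv, tsum_eq_single c, sub_self, invQFactorial_zero, one_mul]
  intro r hr
  rcases lt_or_gt_of_ne hr with hrc | hrc
  · rw [hF r hrc, mul_zero]
  · rw [invQFactorial_of_neg q (by lia), zero_mul]

theorem qConv_const_mul (q a : ℂ) (F : ℤ → ℂ) (n : ℤ) :
    qConv q (fun r ↦ a * F r) n = a * qConv q F n := by
  simp only [qConv, mul_left_comm _ a, tsum_mul_left]

theorem qConv_comp_add_right (q : ℂ) (F : ℤ → ℂ) (d n : ℤ) :
    qConv q (fun r ↦ F (r + d)) n = qConv q F (n + d) := by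
  refine (tsum_congr fun r ↦ ?_).trans ((Equiv.addRight d).tsum_eq _)
  rw [Equiv.coe_addRight, add_sub_add_right_eq_sub]

theorem qConv_one_sub_zpow_mul (hq : ¬IsOfFinOrder q) (F : ℤ → ℂ) (n : ℤ) :
    qConv q (fun r ↦ (1 - q ^ (n - r)) * F r) n = qConv q F (n - 1) := by
  refine tsum_congr fun r ↦ ?_
  rw [sub_right_comm, ← one_sub_zpow_mul_invQFactorial hq]
  ring

/-- Splits `1 - q^(n+1+b)` as `(1 - q^(n+1-r)) + q^(n+1-r) * (1 - q^(b+r))`, the first summand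
lowering `n + 1` and the second one acting on `F`. -/
theorem one_sub_zpow_mul_qConv (hq0 : q ≠ 0) (hq : ¬IsOfFinOrder q) (hF : ∀ r < c, F r = 0)
    (n b : ℤ) :
    (1 - q ^ (n + 1 + b)) * qConv q F (n + 1) = qConv q F n +
      qConv q (fun r ↦ q ^ (n - r) * ((1 - q ^ (b + (r + 1))) * F (r + 1))) n := by
  let F₁ : ℤ → ℂ := fun r ↦ (1 - q ^ (n + 1 - r)) * F r
  let F₂ : ℤ → ℂ := fun r ↦ q ^ (n + 1 - r) * ((1 - q ^ (b + r)) * F r)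
  have hF₁ : ∀ r < c, F₁ r = 0 := fun r hr ↦ by simp [F₁, hF r hr]
  have hF₂ : ∀ r < c, F₂ r = 0 := fun r hr ↦ by simp [F₂, hF r hr]
  have hsplit (r : ℤ) : (1 - q ^ (n + 1 + b)) * (invQFactorial q (n + 1 - r) * F r) =
      invQFactorial q (n + 1 - r) * F₁ r + invQFactorial q (n + 1 - r) * F₂ r := by
    have hpow : q ^ (n + 1 + b) = q ^ (n + 1 - r) * q ^ (b + r) := by
      rw [← zpow_add₀ hq0]
      ring_nf
    simp only [hpow, F₁, F₂]
    ring
  have hfst : qConv q F₁ (n + 1) = qConv q F n := by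
    simpa only [add_sub_cancel_right] using qConv_one_sub_zpow_mul hq F (n + 1)
  have hsnd : (fun r ↦ q ^ (n - r) * ((1 - q ^ (b + (r + 1))) * F (r + 1))) =
      fun r ↦ F₂ (r + 1) := by
    simp only [F₂, add_sub_add_right_eq_sub]
  rw [← hfst, hsnd, qConv_comp_add_right, qConv, ← tsum_mul_left, tsum_congr hsplit,
    (summable_qConv q hF₁ (n + 1)).tsum_add (summable_qConv q hF₂ (n + 1)), ← qConv, ← qConv]

/-- A form of the `q`-Chu–Vandermonde sum. -/
theorem qConv_zpow_sq_mul_eq_self (hq0 : q ≠ 0) (hq : ¬IsOfFinOrder q) {a : ℂ} (ha : a ≠ 0)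
    {G : ℤ → ℂ} (hG : ∀ z, (1 - q ^ z) * (1 - a * q ^ z) * G z = G (z - 1)) (n : ℤ) :
    qConv q (fun r ↦ q ^ (r ^ 2) * a ^ r * G r) n = G n := by
  have hneg {a : ℂ} {G : ℤ → ℂ} (hG : ∀ z, (1 - q ^ z) * (1 - a * q ^ z) * G z = G (z - 1)) :
      ∀ z < 0, G z = 0 := fun z ↦ eq_zero_of_neg_of_mul_eq_sub_one (by simp) hG
  have hsupp {a : ℂ} {G : ℤ → ℂ} (hG : ∀ z, (1 - q ^ z) * (1 - a * q ^ z) * G z = G (z - 1)) :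
      ∀ r < 0, q ^ (r ^ 2) * a ^ r * G r = 0 := fun r hr ↦ by rw [hneg hG r hr, mul_zero]
  rcases lt_or_ge n 0 with hn | hn
  · rw [qConv_of_lt q (hsupp hG) hn, hneg hG n hn]
  lift n to ℕ using hn
  induction n generalizing a G with
  | zero => simp [qConv_self q (hsupp hG)]
  | succ n ih =>
    let G' : ℤ → ℂ := fun r ↦ (1 - q ^ (r + 1)) * G (r + 1)
    have hG' (z : ℤ) : (1 - q ^ z) * (1 - a * q * q ^ z) * G' z = G' (z - 1) := by
      have hz := hG (z + 1)
      rw [add_sub_cancel_right, zpow_add_one₀ hq0] at hz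
      simp only [G', sub_add_cancel]
      rw [zpow_add_one₀ hq0]
      linear_combination (1 - q ^ z) * hz
    have hshift (r : ℤ) : q ^ ((n : ℤ) - r) * ((1 - q ^ (0 + (r + 1))) *
        (q ^ ((r + 1) ^ 2) * a ^ (r + 1) * G (r + 1))) =
        a * q ^ ((n : ℤ) + 1) * (q ^ (r ^ 2) * (a * q) ^ r * G' r) := by
      have hpow : q ^ ((n : ℤ) - r) * q ^ ((r + 1) ^ 2) =
          q ^ ((n : ℤ) + 1) * q ^ (r ^ 2) * q ^ r := by
        simp only [← zpow_add₀ hq0]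
        ring_nf
      simp only [G', zero_add, mul_zpow, zpow_add_one₀ ha]
      linear_combination (1 - q ^ (r + 1)) * a ^ r * a * G (r + 1) * hpow
    have hrec := one_sub_zpow_mul_qConv hq0 hq (hsupp hG) n 0
    simp only [hshift, qConv_const_mul] at hrec
    rw [ih ha hG, ih (mul_ne_zero ha hq0) hG', add_zero] at hrec
    have hn : 1 - q ^ ((n : ℤ) + 1) ≠ 0 := mod_cast one_sub_pow_ne_zero hq n.succ_pos
    have hGn := hG (n + 1)
    rw [add_sub_cancel_right] at hGn
    push_cast
    apply mul_left_cancel₀ hn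
    rw [hrec, ← hGn]
    ring

end QConv

/-- The bilateral sum `∑_m f(m) / ((q;q)_{a-m} (q;q)_{b+m})`. For `a = b = n` this is the member
`β_n` of the Bailey pair relative to `1` with `α_m` spread over `m` and `-m`. -/
noncomputable def bilateralSum (q : ℂ) (f : ℤ → ℂ) (a b : ℤ) : ℂ :=
  qConv q (fun m ↦ f m * invQFactorial q (b + m)) a

/-- The `m`-th term `q^(m²) z^m` of the Jacobi theta series. -/
noncomputable def thetaTerm (q z : ℂ) (m : ℤ) : ℂ := q ^ (m ^ 2) * z ^ m

section BilateralSum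

variable {q z : ℂ}

theorem mul_invQFactorial_add_eq_zero (q : ℂ) (f : ℤ → ℂ) {b : ℤ} :
    ∀ m < -b, f m * invQFactorial q (b + m) = 0 := fun m hm ↦ by
  rw [invQFactorial_of_neg q (by lia), mul_zero]

theorem bilateralSum_comm (q : ℂ) (f : ℤ → ℂ) (a b : ℤ) :
    bilateralSum q f a b = bilateralSum q (fun m ↦ f (-m)) b a := by
  refine ((Equiv.neg ℤ).tsum_eq _).symm.trans (tsum_congr fun m ↦ ?_)
  simp only [Equiv.neg_apply, sub_neg_eq_add, ← sub_eq_add_neg]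
  ring

theorem thetaTerm_neg (q z : ℂ) (m : ℤ) : thetaTerm q z (-m) = thetaTerm q z⁻¹ m := by
  simp only [thetaTerm, neg_sq, zpow_neg, inv_zpow]

theorem bilateralSum_thetaTerm_comm (p q z : ℂ) (a b : ℤ) :
    bilateralSum p (thetaTerm q z) a b = bilateralSum p (thetaTerm q z⁻¹) b a := by
  rw [bilateralSum_comm]
  simp only [thetaTerm_neg]

theorem thetaTerm_add_one (hq0 : q ≠ 0) (hz : z ≠ 0) (m : ℤ) :
    thetaTerm q z (m + 1) = z * q ^ (2 * m + 1) * thetaTerm q z m := by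
  have hpow : q ^ ((m + 1) ^ 2) = q ^ (2 * m + 1) * q ^ (m ^ 2) := by
    rw [← zpow_add₀ hq0]
    ring_nf
  rw [thetaTerm, thetaTerm, hpow, zpow_add_one₀ hz]
  ring

theorem one_sub_zpow_mul_bilateralSum_thetaTerm (hq0 : q ≠ 0) (hq : ¬IsOfFinOrder (q ^ 2))
    (hz : z ≠ 0) (a b : ℤ) :
    (1 - (q ^ 2) ^ (a + 1 + b)) * bilateralSum (q ^ 2) (thetaTerm q z) (a + 1) b =
      (1 + z * q ^ (2 * a + 1)) * bilateralSum (q ^ 2) (thetaTerm q z) a b := by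
  have hterm (r : ℤ) : (q ^ 2) ^ (a - r) * ((1 - (q ^ 2) ^ (b + (r + 1))) *
      (thetaTerm q z (r + 1) * invQFactorial (q ^ 2) (b + (r + 1)))) =
      z * q ^ (2 * a + 1) * (thetaTerm q z r * invQFactorial (q ^ 2) (b + r)) := by
    have hpow : (q ^ 2) ^ (a - r) * q ^ (2 * r + 1) = q ^ (2 * a + 1) := by
      rw [← zpow_natCast, ← zpow_mul, ← zpow_add₀ hq0]
      ring_nf
    have hfactor := one_sub_zpow_mul_invQFactorial hq (b + (r + 1))
    rw [← add_assoc b r 1, add_sub_cancel_right] at hfactor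
    rw [thetaTerm_add_one hq0 hz, ← hpow, ← hfactor, add_assoc b r 1]
    ring
  rw [bilateralSum, bilateralSum, one_sub_zpow_mul_qConv (pow_ne_zero 2 hq0) hq
    (mul_invQFactorial_add_eq_zero _ _)]
  simp only [hterm, qConv_const_mul]
  ring

theorem bilateralSum_thetaTerm_add_one (hq0 : q ≠ 0) (hq : ¬IsOfFinOrder (q ^ 2)) (hz : z ≠ 0)
    {a b : ℕ} {c : ℂ}
    (h : bilateralSum (q ^ 2) (thetaTerm q z) a b = c * invQFactorial (q ^ 2) (a + b)) :
    bilateralSum (q ^ 2) (thetaTerm q z) (a + 1 : ℕ) b =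
      (1 - -(z * q) * (q ^ 2) ^ a) * c * invQFactorial (q ^ 2) ((a + 1 : ℕ) + b) := by
  have hne : 1 - (q ^ 2) ^ ((a : ℤ) + 1 + b) ≠ 0 := by
    have := one_sub_pow_ne_zero hq (n := a + 1 + b) (by lia)
    exact mod_cast this
  have hfactor := one_sub_zpow_mul_invQFactorial hq ((a : ℤ) + 1 + b)
  rw [add_right_comm, add_sub_cancel_right, add_right_comm] at hfactor
  push_cast
  apply mul_left_cancel₀ hne
  rw [one_sub_zpow_mul_bilateralSum_thetaTerm hq0 hq hz, h, zpow_two_mul_natCast_add_one, ← hfactor]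
  ring

/-- The finite form of the Jacobi triple product identity, due to MacMahon. -/
theorem bilateralSum_thetaTerm (hq0 : q ≠ 0) (hq : ¬IsOfFinOrder (q ^ 2)) (hz : z ≠ 0)
    (a b : ℕ) :
    bilateralSum (q ^ 2) (thetaTerm q z) a b =
      qPoch (-(z * q)) (q ^ 2) a * qPoch (-(z⁻¹ * q)) (q ^ 2) b *
        invQFactorial (q ^ 2) (a + b) := by
  induction a with
  | succ a ih =>
    rw [bilateralSum_thetaTerm_add_one hq0 hq hz ih, qPoch_succ]
    ring
  | zero =>
    induction b with
    | zero =>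
      have hself := qConv_self (q ^ 2) (mul_invQFactorial_add_eq_zero (q ^ 2) (thetaTerm q z)
        (b := 0))
      simpa [bilateralSum, thetaTerm, qPoch, invQFactorial_zero] using hself
    | succ b ih =>
      rw [bilateralSum_thetaTerm_comm, add_comm (Nat.cast 0)] at ih
      rw [bilateralSum_thetaTerm_comm, bilateralSum_thetaTerm_add_one hq0 hq (inv_ne_zero hz) ih,
        qPoch_succ _ _ b, add_comm (Nat.cast 0)]
      ring

end BilateralSum

section Limits

variable {q z : ℂ} {f : ℤ → ℂ}

theorem tendsto_tsum_mul_of_norm_le {α ι : Type*} {l : Filter α} {c : α → ι → ℂ} {F : ι → ℂ}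
    {C : ℝ} {L : ℂ} (hF : Summable F) (hC : ∀ n i, ‖c n i‖ ≤ C)
    (hc : ∀ i, Tendsto (c · i) l (𝓝 L)) :
    Tendsto (fun n ↦ ∑' i, c n i * F i) l (𝓝 (L * ∑' i, F i)) := by
  rw [← tsum_mul_left]
  refine tendsto_tsum_of_dominated_convergence (hF.norm.mul_left C)
    (fun i ↦ (hc i).mul_const (F i)) (.of_forall fun n i ↦ ?_)
  rw [norm_mul]
  exact mul_le_mul_of_nonneg_right (hC n i) (norm_nonneg _)

theorem tendsto_invQFactorial_sub (hq : ‖q‖ < 1) (m : ℤ) :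
    Tendsto (fun n ↦ invQFactorial q (n - m)) atTop (𝓝 (qPochInf q q)⁻¹) :=
  (tendsto_invQFactorial hq).comp (tendsto_atTop_add_const_right _ (-m) tendsto_id)

theorem tendsto_bilateralSum (hq : ‖q‖ < 1) (hf : Summable f) :
    Tendsto (fun n ↦ bilateralSum q f n n) atTop
      (𝓝 ((qPochInf q q)⁻¹ * (qPochInf q q)⁻¹ * ∑' m, f m)) := by
  obtain ⟨K, hK⟩ := exists_norm_invQFactorial_le hq
  have hlim := tendsto_tsum_mul_of_norm_le (C := K * K)
    (c := fun n m ↦ invQFactorial q (n - m) * invQFactorial q (n - -m)) hf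
    (fun n m ↦ (norm_mul_le _ _).trans
      (mul_le_mul (hK _) (hK _) (norm_nonneg _) ((norm_nonneg _).trans (hK 0))))
    fun m ↦ (tendsto_invQFactorial_sub hq m).mul (tendsto_invQFactorial_sub hq (-m))
  refine hlim.congr fun n ↦ tsum_congr fun m ↦ ?_
  rw [sub_neg_eq_add, mul_assoc, mul_comm (invQFactorial q (n + m))]

theorem thetaTerm_ne_zero (hq0 : q ≠ 0) (hz : z ≠ 0) (m : ℤ) : thetaTerm q z m ≠ 0 :=
  mul_ne_zero (zpow_ne_zero _ hq0) (zpow_ne_zero _ hz)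

theorem summable_thetaTerm_natCast (hq0 : q ≠ 0) (hq : ‖q‖ < 1) (hz : z ≠ 0) :
    Summable fun n : ℕ ↦ thetaTerm q z n := by
  refine summable_of_ratio_test_tendsto_lt_one zero_lt_one
    (.of_forall fun n ↦ thetaTerm_ne_zero hq0 hz n) ?_
  have hratio (n : ℕ) : ‖thetaTerm q z (n + 1 : ℕ)‖ / ‖thetaTerm q z n‖ =
      ‖z * q‖ * (‖q‖ ^ 2) ^ n := by
    rw [Nat.cast_succ, thetaTerm_add_one hq0 hz, norm_mul,
      mul_div_cancel_right₀ _ (norm_ne_zero_iff.2 (thetaTerm_ne_zero hq0 hz n)),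
      zpow_two_mul_natCast_add_one, ← mul_assoc, norm_mul, norm_pow, norm_pow]
  simp only [hratio]
  simpa only [mul_zero] using (tendsto_pow_atTop_nhds_zero_of_lt_one (sq_nonneg ‖q‖)
    (pow_lt_one₀ (norm_nonneg q) hq two_ne_zero)).const_mul ‖z * q‖

theorem summable_thetaTerm (hq0 : q ≠ 0) (hq : ‖q‖ < 1) (hz : z ≠ 0) :
    Summable (thetaTerm q z) := by
  refine .of_nat_of_neg (summable_thetaTerm_natCast hq0 hq hz) ?_
  simpa only [thetaTerm_neg] using summable_thetaTerm_natCast hq0 hq (inv_ne_zero hz)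

/-- The Jacobi triple product identity. -/
theorem tsum_thetaTerm (hq0 : q ≠ 0) (hq : ‖q‖ < 1) (hz : z ≠ 0) :
    ∑' m, thetaTerm q z m =
      qPochInf (q ^ 2) (q ^ 2) * qPochInf (-(z * q)) (q ^ 2) * qPochInf (-(z⁻¹ * q)) (q ^ 2) := by
  have hQ := norm_pow_lt_one hq two_ne_zero
  have hQ0 := qPochInf_self_ne_zero hQ
  have hsum := (tendsto_bilateralSum hQ (summable_thetaTerm hq0 hq hz)).comp
    tendsto_natCast_atTop_atTop
  have hdouble : Tendsto (fun n : ℕ ↦ (n : ℤ) + n) atTop atTop :=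
    tendsto_natCast_atTop_atTop.atTop_add_atTop tendsto_natCast_atTop_atTop
  have hprod := ((tendsto_qPoch (-(z * q)) hQ).mul (tendsto_qPoch (-(z⁻¹ * q)) hQ)).mul
    ((tendsto_invQFactorial hQ).comp hdouble)
  have heq := tendsto_nhds_unique (hsum.congr fun n ↦ bilateralSum_thetaTerm hq0
    (not_isOfFinOrder_of_norm_lt_one hQ) hz n n) hprod
  rw [mul_assoc, mul_comm _ (qPochInf (q ^ 2) (q ^ 2))⁻¹] at heq
  rw [mul_assoc, (inv_mul_eq_iff_eq_mul₀ hQ0).1 (mul_left_cancel₀ (inv_ne_zero hQ0) heq)]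

end Limits

section BaileyLemma

variable {q : ℂ}

theorem one_sub_zpow_mul_bilateralSum_zpow (hq0 : q ≠ 0) (hq : ¬IsOfFinOrder (q ^ 2)) (a b : ℤ) :
    (1 - q ^ (a + b)) * bilateralSum (q ^ 2) (q ^ ·) a b =
      bilateralSum (q ^ 2) (q ^ ·) (a - 1) b := by
  let F : ℤ → ℂ := fun m ↦ q ^ m * invQFactorial (q ^ 2) (b + m)
  have hF : ∀ m < -b, F m = 0 := mul_invQFactorial_add_eq_zero (q ^ 2) (q ^ ·)
  have hF' : ∀ m < -b, (q ^ 2) ^ (a - m) * F m = 0 := fun m hm ↦ by rw [hF m hm, mul_zero]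
  -- The substitution `m ↦ a - b - m` swaps the two reciprocal factorials.
  have hreflect : q ^ (a + b) * qConv (q ^ 2) F a =
      qConv (q ^ 2) (fun m ↦ (q ^ 2) ^ (a - m) * F m) a := by
    rw [qConv, ← (Equiv.subLeft (a - b)).tsum_eq, ← tsum_mul_left]
    refine tsum_congr fun m ↦ ?_
    have hpow : q ^ (a + b) * q ^ (a - b - m) = (q ^ 2) ^ (a - m) * q ^ m := by
      rw [← zpow_natCast q 2, ← zpow_mul, ← zpow_add₀ hq0, ← zpow_add₀ hq0]
      ring_nf
    simp only [F, Equiv.subLeft_apply, show a - (a - b - m) = b + m by lia,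
      show b + (a - b - m) = a - m by lia]
    linear_combination invQFactorial (q ^ 2) (b + m) * invQFactorial (q ^ 2) (a - m) * hpow
  rw [bilateralSum, bilateralSum, ← qConv_one_sub_zpow_mul hq, sub_mul, one_mul, hreflect, qConv,
    qConv, ← (summable_qConv _ hF a).tsum_sub (summable_qConv _ hF' a)]
  simp only [← mul_sub, ← one_sub_mul, F, qConv]

theorem bilateralSum_zpow (hq0 : q ≠ 0) (hq : ¬IsOfFinOrder q) (a b : ℤ) :
    bilateralSum (q ^ 2) (q ^ ·) a b = q ^ (-b) * invQFactorial q (a + b) := by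
  have hq2 : ¬IsOfFinOrder (q ^ 2) := not_isOfFinOrder_pow hq two_ne_zero
  have hrec (z : ℤ) : (1 - q ^ z) * bilateralSum (q ^ 2) (q ^ ·) (z - b) b =
      bilateralSum (q ^ 2) (q ^ ·) (z - 1 - b) b := by
    rw [sub_right_comm, ← one_sub_zpow_mul_bilateralSum_zpow hq0 hq2, sub_add_cancel]
  have hbase : bilateralSum (q ^ 2) (q ^ ·) (0 - b) b = q ^ (-b) := by
    rw [zero_sub, bilateralSum, qConv_self _ (mul_invQFactorial_add_eq_zero _ _), add_neg_cancel,
      invQFactorial_zero, mul_one]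
  have h := eq_mul_invQFactorial hq hrec (a + b)
  rwa [hbase, add_sub_cancel_right] at h

theorem qConv_zpow_sq_mul_invQFactorial (hq0 : q ≠ 0) (hq : ¬IsOfFinOrder q) (m n : ℤ) :
    qConv q (fun r ↦ q ^ (r ^ 2) * (invQFactorial q (r - m) * invQFactorial q (r + m))) n =
      q ^ (m ^ 2) * (invQFactorial q (n - m) * invQFactorial q (n + m)) := by
  let G : ℤ → ℂ := fun r ↦ invQFactorial q r * invQFactorial q (r + 2 * m)
  have hG (z : ℤ) : (1 - q ^ z) * (1 - q ^ (2 * m) * q ^ z) * G z = G (z - 1) := by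
    simp only [G, ← zpow_add₀ hq0, ← one_sub_zpow_mul_invQFactorial hq,
      show z - 1 + 2 * m = z + 2 * m - 1 by lia, add_comm (2 * m)]
    ring
  have hGm (r : ℤ) : G (r + -m) = invQFactorial q (r - m) * invQFactorial q (r + m) := by
    simp only [G, ← sub_eq_add_neg, show r - m + 2 * m = r + m by lia]
  have hpow (r : ℤ) : q ^ ((r + -m) ^ 2) * (q ^ (2 * m)) ^ (r + -m) =
      (q ^ (m ^ 2))⁻¹ * q ^ (r ^ 2) := by
    rw [← zpow_mul, ← zpow_neg, ← zpow_add₀ hq0, ← zpow_add₀ hq0]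
    ring_nf
  have h := qConv_zpow_sq_mul_eq_self hq0 hq (zpow_ne_zero _ hq0) hG (n + -m)
  rw [← qConv_comp_add_right] at h
  simp only [hGm, hpow, mul_assoc, qConv_const_mul] at h
  exact (inv_mul_eq_iff_eq_mul₀ (zpow_ne_zero _ hq0)).1 h

/-- Bailey's lemma. -/
theorem qConv_zpow_sq_mul_bilateralSum (hq0 : q ≠ 0) (hq : ¬IsOfFinOrder q) (f : ℤ → ℂ) (n : ℤ) :
    qConv q (fun r ↦ q ^ (r ^ 2) * bilateralSum q f r r) n =
      bilateralSum q (fun m ↦ q ^ (m ^ 2) * f m) n n := by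
  let term : ℤ → ℤ → ℂ := fun r m ↦ invQFactorial q (n - r) *
    (q ^ (r ^ 2) * (invQFactorial q (r - m) * (f m * invQFactorial q (r + m))))
  have hsumm : Summable (Function.uncurry term) := by
    refine summable_of_ne_finset_zero (s := Finset.Icc 0 n ×ˢ Finset.Icc (-n) n)
      fun ⟨r, m⟩ hrm ↦ ?_
    have : n - r < 0 ∨ r - m < 0 ∨ r + m < 0 := by
      simp only [Finset.mem_product, Finset.mem_Icc] at hrm
      lia
    rcases this with h | h | h <;> simp [term, invQFactorial_of_neg q h]
  have hinner (m : ℤ) : ∑' r, term r m =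
      invQFactorial q (n - m) * (q ^ (m ^ 2) * f m * invQFactorial q (n + m)) := by
    have hterm (r : ℤ) : term r m = f m * (invQFactorial q (n - r) *
        (q ^ (r ^ 2) * (invQFactorial q (r - m) * invQFactorial q (r + m)))) := by
      simp only [term]
      ring
    simp only [hterm, tsum_mul_left]
    rw [← qConv, qConv_zpow_sq_mul_invQFactorial hq0 hq]
    ring
  calc qConv q (fun r ↦ q ^ (r ^ 2) * bilateralSum q f r r) n
    _ = ∑' r, ∑' m, term r m := by simp only [qConv, bilateralSum, term, tsum_mul_left]
    _ = ∑' m, ∑' r, term r m := hsumm.tsum_comm.symm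
    _ = bilateralSum q (fun m ↦ q ^ (m ^ 2) * f m) n n := tsum_congr hinner

end BaileyLemma

/-- The Bailey chain `β_c(n) = ∑_m q^(2cm²+m) / ((q²;q²)_{n-m} (q²;q²)_{n+m})`. -/
noncomputable def thetaBeta (q : ℂ) (c : ℕ) (n : ℤ) : ℂ :=
  bilateralSum (q ^ 2) (thetaTerm (q ^ (2 * c)) q) n n

section ThetaBeta

variable {q : ℂ}

theorem qConv_zpow_mul_thetaBeta (hq0 : q ≠ 0) (hq : ¬IsOfFinOrder q) (c : ℕ) (n : ℤ) :
    qConv (q ^ 2) (fun r ↦ q ^ (2 * r ^ 2) * thetaBeta q c r) n = thetaBeta q (c + 1) n := by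
  have hQ : ¬IsOfFinOrder (q ^ 2) := not_isOfFinOrder_pow hq two_ne_zero
  have hpow (r : ℤ) : q ^ (2 * r ^ 2) = (q ^ 2) ^ (r ^ 2) := zpow_mul q 2 _
  have hterm (m : ℤ) : (q ^ 2) ^ (m ^ 2) * thetaTerm (q ^ (2 * c)) q m =
      thetaTerm (q ^ (2 * (c + 1))) q m := by
    rw [thetaTerm, thetaTerm, ← mul_assoc, ← mul_zpow, ← pow_add, mul_add_one, add_comm]
  simp only [hpow, thetaBeta, qConv_zpow_sq_mul_bilateralSum (pow_ne_zero 2 hq0) hQ, hterm]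

theorem thetaBeta_zero (hq0 : q ≠ 0) (hq : ¬IsOfFinOrder q) (n : ℤ) :
    thetaBeta q 0 n = q ^ (-n) * invQFactorial q (2 * n) := by
  have hterm : thetaTerm (q ^ (2 * 0)) q = (q ^ ·) := by
    funext m
    simp [thetaTerm]
  rw [thetaBeta, hterm, bilateralSum_zpow hq0 hq, two_mul]

theorem qConv_zpow_mul_invQFactorial_two_mul (hq0 : q ≠ 0) (hq : ¬IsOfFinOrder q) (n : ℤ) :
    qConv (q ^ 2) (fun r ↦ q ^ (2 * r ^ 2 - r) * invQFactorial q (2 * r)) n =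
      invQFactorial q (2 * n) := by
  have hQ : ¬IsOfFinOrder (q ^ 2) := not_isOfFinOrder_pow hq two_ne_zero
  have hrec (z : ℤ) : (1 - (q ^ 2) ^ z) * (1 - q⁻¹ * (q ^ 2) ^ z) * invQFactorial q (2 * z) =
      invQFactorial q (2 * (z - 1)) := by
    have hpow : (q ^ 2) ^ z = q ^ (2 * z) := (zpow_mul q 2 z).symm
    have hpow' : q⁻¹ * q ^ (2 * z) = q ^ (2 * z - 1) := by rw [zpow_sub_one₀ hq0, mul_comm]
    rw [hpow, hpow', mul_right_comm, one_sub_zpow_mul_invQFactorial hq, mul_comm,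
      one_sub_zpow_mul_invQFactorial hq, mul_sub_one, sub_sub, one_add_one_eq_two]
  have hpow (r : ℤ) : q ^ (2 * r ^ 2 - r) = (q ^ 2) ^ (r ^ 2) * q⁻¹ ^ r := by
    rw [inv_zpow', sub_eq_add_neg, zpow_add₀ hq0, zpow_mul]
    rfl
  simp only [hpow]
  exact qConv_zpow_sq_mul_eq_self (G := fun r ↦ invQFactorial q (2 * r)) (pow_ne_zero 2 hq0) hQ
    (inv_ne_zero hq0) hrec n

theorem thetaBeta_one (hq0 : q ≠ 0) (hq : ¬IsOfFinOrder q) (n : ℤ) :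
    thetaBeta q 1 n = invQFactorial q (2 * n) := by
  rw [← qConv_zpow_mul_invQFactorial_two_mul hq0 hq, ← zero_add 1,
    ← qConv_zpow_mul_thetaBeta hq0 hq]
  simp only [thetaBeta_zero hq0 hq, ← mul_assoc, ← zpow_add₀ hq0, ← sub_eq_add_neg]

theorem qConv_zpow_mul_thetaBeta_one (hq0 : q ≠ 0) (hq : ¬IsOfFinOrder q) (n : ℤ) :
    qConv (q ^ 2) (fun r ↦ q ^ (2 * r ^ 2 - r) * thetaBeta q 1 r) n = thetaBeta q 1 n := by
  simp only [thetaBeta_one hq0 hq, qConv_zpow_mul_invQFactorial_two_mul hq0 hq]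

theorem tendsto_thetaBeta (hq0 : q ≠ 0) (hq : ‖q‖ < 1) {c : ℕ} (hc : c ≠ 0) :
    Tendsto (thetaBeta q c) atTop (𝓝 ((qPochInf (q ^ 2) (q ^ 2))⁻¹ *
      (qPochInf (q ^ 2) (q ^ 2))⁻¹ * ∑' m, thetaTerm (q ^ (2 * c)) q m)) := by
  have hqc : ‖q ^ (2 * c)‖ < 1 := norm_pow_lt_one hq (mul_ne_zero two_ne_zero hc)
  exact tendsto_bilateralSum (norm_pow_lt_one hq two_ne_zero)
    (summable_thetaTerm (pow_ne_zero _ hq0) hqc hq0)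

end ThetaBeta

/-- The summand `w_0(s_0) ⋯ w_d(s_d) γ(s_d) / ((q;q)_{s_0-s_1} ⋯ (q;q)_{s_{d-1}-s_d})` of a multisum
over chains. It vanishes unless `s` is weakly decreasing, so the sum may run over all tuples. -/
noncomputable def chainTerm (q : ℂ) (w : ℕ → ℤ → ℂ) (γ : ℤ → ℂ) {d : ℕ} (s : Fin (d + 1) → ℤ) : ℂ :=
  (∏ m : Fin (d + 1), w m (s m)) *
    (∏ m : Fin d, invQFactorial q (s m.castSucc - s m.succ)) * γ (s (Fin.last d))

/-- The sum of `chainTerm` over all chains, with the further factor `1 / (q;q)_{n-s_0}` that joins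
them to an upper end `n`. -/
noncomputable def chainSum (q : ℂ) (w : ℕ → ℤ → ℂ) (γ : ℤ → ℂ) (d : ℕ) (n : ℤ) : ℂ :=
  ∑' s : Fin (d + 1) → ℤ, invQFactorial q (n - s 0) * chainTerm q w γ s

section Chain

variable {q : ℂ} {w : ℕ → ℤ → ℂ} {γ : ℤ → ℂ} {u : ℤ → ℝ} {C K : ℝ} {d : ℕ}

theorem summable_prod_apply {ι : Type*} {u : ι → ℝ} (hu0 : 0 ≤ u) (hu : Summable u) (d : ℕ) :
    Summable fun s : Fin d → ι ↦ ∏ m, u (s m) := by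
  induction d with
  | zero => exact .of_finite
  | succ d ih =>
    rw [← (Fin.consEquiv fun _ ↦ ι).summable_iff]
    refine (hu.mul_of_nonneg ih hu0 fun s ↦ Finset.prod_nonneg fun m _ ↦ hu0 (s m)).congr
      fun p ↦ ?_
    simp [Fin.consEquiv, Fin.prod_univ_succ]

theorem norm_chainTerm_le (hK : ∀ z, ‖invQFactorial q z‖ ≤ K) (hw : ∀ m x, ‖w m x‖ ≤ u x)
    (hγ : ∀ x, ‖γ x‖ ≤ C) (s : Fin (d + 1) → ℤ) :
    ‖chainTerm q w γ s‖ ≤ (∏ m, u (s m)) * K ^ d * C := by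
  have hK0 : 0 ≤ K := (norm_nonneg _).trans (hK 0)
  have hu0 (x : ℤ) : 0 ≤ u x := (norm_nonneg _).trans (hw 0 x)
  have hweights : ∏ m : Fin (d + 1), ‖w m (s m)‖ ≤ ∏ m, u (s m) :=
    Finset.prod_le_prod (fun m _ ↦ norm_nonneg _) fun m _ ↦ hw m (s m)
  have hgaps : ∏ m : Fin d, ‖invQFactorial q (s m.castSucc - s m.succ)‖ ≤ K ^ d := by
    simpa using Finset.prod_le_prod (fun (m : Fin d) (_ : m ∈ Finset.univ) ↦ norm_nonneg _)
      fun m _ ↦ hK (s m.castSucc - s m.succ)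
  have hprod0 : 0 ≤ ∏ m, u (s m) := Finset.prod_nonneg fun m _ ↦ hu0 (s m)
  rw [chainTerm, norm_mul, norm_mul, norm_prod, norm_prod]
  gcongr
  exact hγ _

theorem summable_chainTerm (hq : ‖q‖ < 1) (hu : Summable u) (hw : ∀ m x, ‖w m x‖ ≤ u x)
    (hγ : ∀ x, ‖γ x‖ ≤ C) (d : ℕ) :
    Summable fun s : Fin (d + 1) → ℤ ↦ chainTerm q w γ s := by
  obtain ⟨K, hK⟩ := exists_norm_invQFactorial_le hq
  have hu0 : 0 ≤ u := fun x ↦ (norm_nonneg _).trans (hw 0 x)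
  exact .of_norm_bounded (((summable_prod_apply hu0 hu (d + 1)).mul_right (K ^ d)).mul_right C)
    (norm_chainTerm_le hK hw hγ)

theorem summable_invQFactorial_mul_chainTerm (hq : ‖q‖ < 1) (hu : Summable u)
    (hw : ∀ m x, ‖w m x‖ ≤ u x) (hγ : ∀ x, ‖γ x‖ ≤ C) (d : ℕ) (n : ℤ) :
    Summable fun s : Fin (d + 1) → ℤ ↦ invQFactorial q (n - s 0) * chainTerm q w γ s := by
  obtain ⟨K, hK⟩ := exists_norm_invQFactorial_le hq
  refine .of_norm_bounded ((summable_chainTerm hq hu hw hγ d).norm.mul_left K) fun s ↦ ?_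
  rw [norm_mul]
  exact mul_le_mul_of_nonneg_right (hK _) (norm_nonneg _)

theorem chainTerm_cons (q : ℂ) (w : ℕ → ℤ → ℂ) (γ : ℤ → ℂ) (r : ℤ) (s : Fin (d + 1) → ℤ) :
    chainTerm q w γ (Fin.cons r s : Fin (d + 2) → ℤ) =
      w 0 r * (invQFactorial q (r - s 0) * chainTerm q (fun m ↦ w (m + 1)) γ s) := by
  simp only [chainTerm, Fin.prod_univ_succ (n := d + 1), Fin.prod_univ_succ (n := d),
    Fin.cons_zero, Fin.cons_succ, Fin.castSucc_zero, Fin.castSucc_succ, Fin.val_zero, Fin.val_succ,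
    ← Fin.succ_last]
  ring

theorem chainSum_zero (q : ℂ) (w : ℕ → ℤ → ℂ) (γ : ℤ → ℂ) (n : ℤ) :
    chainSum q w γ 0 n = qConv q (fun r ↦ w 0 r * γ r) n := by
  rw [chainSum, ← (Equiv.funUnique (Fin 1) ℤ).symm.tsum_eq]
  refine tsum_congr fun r ↦ ?_
  simp [chainTerm]

theorem chainSum_succ (hq : ‖q‖ < 1) (hu : Summable u) (hw : ∀ m x, ‖w m x‖ ≤ u x)
    (hγ : ∀ x, ‖γ x‖ ≤ C) (d : ℕ) (n : ℤ) :
    chainSum q w γ (d + 1) n =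
      qConv q (fun r ↦ w 0 r * chainSum q (fun m ↦ w (m + 1)) γ d r) n := by
  let e := Fin.consEquiv fun _ : Fin (d + 2) ↦ ℤ
  have hsumm := e.summable_iff.2 (summable_invQFactorial_mul_chainTerm hq hu hw hγ (d + 1) n)
  refine (e.tsum_eq _).symm.trans (hsumm.tsum_prod.trans (tsum_congr fun r ↦ ?_))
  simp only [e, Fin.consEquiv, Function.comp_apply, Equiv.coe_fn_mk, Fin.cons_zero, chainTerm_cons,
    chainSum, tsum_mul_left]

theorem tendsto_chainSum (hq : ‖q‖ < 1) (hu : Summable u) (hw : ∀ m x, ‖w m x‖ ≤ u x)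
    (hγ : ∀ x, ‖γ x‖ ≤ C) (d : ℕ) :
    Tendsto (chainSum q w γ d) atTop
      (𝓝 ((qPochInf q q)⁻¹ * ∑' s : Fin (d + 1) → ℤ, chainTerm q w γ s)) := by
  obtain ⟨K, hK⟩ := exists_norm_invQFactorial_le hq
  exact tendsto_tsum_mul_of_norm_le (summable_chainTerm hq hu hw hγ d) (fun n s ↦ hK (n - s 0))
    fun s ↦ tendsto_invQFactorial_sub hq (s 0)

theorem antitone_and_nonneg_of_chainTerm_ne_zero (hγ : ∀ x < 0, γ x = 0) {s : Fin (d + 1) → ℤ}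
    (hs : chainTerm q w γ s ≠ 0) : Antitone s ∧ ∀ m, 0 ≤ s m := by
  rw [chainTerm, mul_ne_zero_iff, mul_ne_zero_iff, Finset.prod_ne_zero_iff,
    Finset.prod_ne_zero_iff] at hs
  obtain ⟨⟨-, hgaps⟩, hlast⟩ := hs
  have hanti : Antitone s := Fin.antitone_iff_succ_le.2 fun m ↦ not_lt.1 fun h ↦
    hgaps m (Finset.mem_univ m) (invQFactorial_of_neg q (sub_neg.2 h))
  exact ⟨hanti, fun m ↦ (not_lt.1 fun h ↦ hlast (hγ _ h)).trans (hanti (Fin.le_last m))⟩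

theorem tsum_chainTerm_natCast (hγ : ∀ x < 0, γ x = 0) (d : ℕ) :
    ∑' s : {s : Fin (d + 1) → ℕ // Antitone s}, chainTerm q w γ (fun m ↦ (s.1 m : ℤ)) =
      ∑' s : Fin (d + 1) → ℤ, chainTerm q w γ s := by
  let toInt : {s : Fin (d + 1) → ℕ // Antitone s} → Fin (d + 1) → ℤ := fun s m ↦ s.1 m
  have hinj : Function.Injective toInt := fun s t h ↦
    Subtype.ext (funext fun m ↦ Nat.cast_injective (congrFun h m))
  refine hinj.tsum_eq fun s hs ↦ ?_
  obtain ⟨hanti, hnonneg⟩ := antitone_and_nonneg_of_chainTerm_ne_zero hγ hs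
  lift s to Fin (d + 1) → ℕ using hnonneg
  exact ⟨⟨s, fun a b hab ↦ Nat.cast_le.1 (hanti hab)⟩, rfl⟩

end Chain

/-- The weight `q^(2x² - x)` or `q^(2x²)` of the variable `s_m`, according to whether `m` belongs to
the linear perturbation `∑_{m ≥ j} s_m`. -/
noncomputable def chainWeight (q : ℂ) (j m : ℕ) (x : ℤ) : ℂ :=
  q ^ (2 * x ^ 2 - if j ≤ m then x else 0)

section ChainWeight

variable {q : ℂ}

theorem prod_zpow_eq_zpow_sum {ι G₀ : Type*} [CommGroupWithZero G₀] {a : G₀} (ha : a ≠ 0)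
    (s : Finset ι) (e : ι → ℤ) : ∏ m ∈ s, a ^ e m = a ^ ∑ m ∈ s, e m := by
  classical
  induction s using Finset.induction_on with
  | empty => simp
  | insert m s hm ih => rw [Finset.prod_insert hm, Finset.sum_insert hm, ih, zpow_add₀ ha]

theorem prod_range_chainWeight (hq0 : q ≠ 0) (j n : ℕ) (t : ℕ → ℤ) :
    ∏ m ∈ Finset.range n, chainWeight q j m (t m) =
      q ^ (2 * ∑ m ∈ Finset.range n, t m ^ 2 - ∑ m ∈ Finset.Ico j n, t m) := by
  have hfilter : Finset.Ico j n = {m ∈ Finset.range n | j ≤ m} := by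
    ext m
    simp [and_comm]
  simp only [chainWeight]
  rw [prod_zpow_eq_zpow_sum hq0, Finset.sum_sub_distrib, Finset.mul_sum, hfilter,
    Finset.sum_filter]

theorem norm_chainWeight_le (hq0 : q ≠ 0) (hq : ‖q‖ < 1) (j m : ℕ) (x : ℤ) :
    ‖chainWeight q j m x‖ ≤ ‖q‖ ^ x.natAbs := by
  have hsq : |x| ≤ x ^ 2 := by
    rw [← sq_abs]
    exact Int.le_self_sq |x|
  have hexp : (x.natAbs : ℤ) ≤ 2 * x ^ 2 - if j ≤ m then x else 0 := by
    rw [Int.natCast_natAbs]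
    split_ifs <;> linarith [le_abs_self x, abs_nonneg x]
  rw [chainWeight, norm_zpow, ← zpow_natCast]
  exact zpow_le_zpow_right_of_le_one₀ (norm_pos_iff.2 hq0) hq.le hexp

theorem summable_pow_natAbs {ρ : ℝ} (hρ0 : 0 ≤ ρ) (hρ : ρ < 1) :
    Summable fun x : ℤ ↦ ρ ^ x.natAbs :=
  .of_nat_of_neg (by simpa using summable_geometric_of_lt_one hρ0 hρ)
    (by simpa using summable_geometric_of_lt_one hρ0 hρ)

theorem thetaBeta_one_of_neg (hq0 : q ≠ 0) (hq : ¬IsOfFinOrder q) {x : ℤ} (hx : x < 0) :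
    thetaBeta q 1 x = 0 := by
  rw [thetaBeta_one hq0 hq, invQFactorial_of_neg q (by lia)]

theorem exists_norm_thetaBeta_one_le (hq0 : q ≠ 0) (hq : ‖q‖ < 1) :
    ∃ C, ∀ x, ‖thetaBeta q 1 x‖ ≤ C := by
  obtain ⟨C, hC⟩ := exists_norm_invQFactorial_le hq
  refine ⟨C, fun x ↦ ?_⟩
  rw [thetaBeta_one hq0 (not_isOfFinOrder_of_norm_lt_one hq)]
  exact hC _

theorem qConv_chainWeight_zero_mul_thetaBeta (hq0 : q ≠ 0) (hq : ¬IsOfFinOrder q) (n : ℤ) :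
    qConv (q ^ 2) (fun r ↦ chainWeight q 0 0 r * thetaBeta q 1 r) n = thetaBeta q 1 n := by
  simpa [chainWeight] using qConv_zpow_mul_thetaBeta_one hq0 hq n

theorem qConv_chainWeight_succ_mul_thetaBeta (hq0 : q ≠ 0) (hq : ¬IsOfFinOrder q) (j c : ℕ)
    (n : ℤ) :
    qConv (q ^ 2) (fun r ↦ chainWeight q (j + 1) 0 r * thetaBeta q c r) n =
      thetaBeta q (c + 1) n := by
  simpa [chainWeight] using qConv_zpow_mul_thetaBeta hq0 hq c n

theorem chainSum_chainWeight_thetaBeta (hq0 : q ≠ 0) (hq : ‖q‖ < 1) {d j : ℕ} (hj : j ≤ d + 1)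
    (n : ℤ) :
    chainSum (q ^ 2) (chainWeight q j) (thetaBeta q 1) d n = thetaBeta q (j + 1) n := by
  have hq' := not_isOfFinOrder_of_norm_lt_one hq
  obtain ⟨C, hC⟩ := exists_norm_thetaBeta_one_le hq0 hq
  induction d generalizing j n with
  | zero =>
    rw [chainSum_zero]
    obtain rfl | rfl : j = 0 ∨ j = 1 := by lia
    · exact qConv_chainWeight_zero_mul_thetaBeta hq0 hq' n
    · exact qConv_chainWeight_succ_mul_thetaBeta hq0 hq' 0 1 n
  | succ d ih =>
    rw [chainSum_succ (norm_pow_lt_one hq two_ne_zero) (summable_pow_natAbs (norm_nonneg q) hq)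
      (norm_chainWeight_le hq0 hq j) hC]
    cases j with
    | zero =>
      have hshift : (fun m ↦ chainWeight q 0 (m + 1)) = chainWeight q 0 := by
        funext m x
        simp [chainWeight]
      simp only [hshift, ih (Nat.zero_le _)]
      exact qConv_chainWeight_zero_mul_thetaBeta hq0 hq' n
    | succ j =>
      have hshift : (fun m ↦ chainWeight q (j + 1) (m + 1)) = chainWeight q j := by
        funext m x
        simp [chainWeight]
      simp only [hshift, ih (Nat.le_of_succ_le_succ hj)]
      exact qConv_chainWeight_succ_mul_thetaBeta hq0 hq' j (j + 1) n

theorem tsum_chainTerm_chainWeight (hq0 : q ≠ 0) (hq : ‖q‖ < 1) {d j : ℕ} (hj : j ≤ d + 1) :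
    ∑' s : Fin (d + 1) → ℤ, chainTerm (q ^ 2) (chainWeight q j) (thetaBeta q 1) s =
      (∑' m, thetaTerm (q ^ (2 * (j + 1))) q m) / qPochInf (q ^ 2) (q ^ 2) := by
  obtain ⟨C, hC⟩ := exists_norm_thetaBeta_one_le hq0 hq
  have hQ := norm_pow_lt_one hq two_ne_zero
  have hchain := tendsto_chainSum hQ (summable_pow_natAbs (norm_nonneg q) hq)
    (norm_chainWeight_le hq0 hq j) hC d
  have hlim := tendsto_nhds_unique
    (hchain.congr fun n ↦ chainSum_chainWeight_thetaBeta hq0 hq hj n)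
    (tendsto_thetaBeta hq0 hq j.succ_ne_zero)
  rw [mul_assoc] at hlim
  rw [mul_left_cancel₀ (inv_ne_zero (qPochInf_self_ne_zero hQ)) hlim, inv_mul_eq_div]

theorem tsum_thetaTerm_pow_self (hq0 : q ≠ 0) (hq : ‖q‖ < 1) {i : ℕ} (hi : 1 ≤ i) :
    ∑' m, thetaTerm (q ^ (2 * i)) q m =
      qPochInf (q ^ (4 * i)) (q ^ (4 * i)) * qPochInf (-(q ^ (2 * i - 1))) (q ^ (4 * i)) *
        qPochInf (-(q ^ (2 * i + 1))) (q ^ (4 * i)) := by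
  have hqi : ‖q ^ (2 * i)‖ < 1 := norm_pow_lt_one hq (by lia)
  have hbase : (q ^ (2 * i)) ^ 2 = q ^ (4 * i) := by
    rw [← pow_mul]
    ring_nf
  have hpred : q⁻¹ * q ^ (2 * i) = q ^ (2 * i - 1) := by
    rw [pow_sub₀ q hq0 (by lia), pow_one, mul_comm]
  rw [tsum_thetaTerm (pow_ne_zero _ hq0) hqi hq0, hbase, hpred, ← pow_succ', mul_right_comm]

theorem chainTerm_chainWeight_natCast (hq0 : q ≠ 0) (hq : ¬IsOfFinOrder q) (j : ℕ) {d : ℕ}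
    {s : Fin (d + 1) → ℕ} (hs : Antitone s) {t : ℕ → ℕ} (hst : ∀ m, s m = t m) :
    chainTerm (q ^ 2) (chainWeight q j) (thetaBeta q 1) (fun m ↦ (s m : ℤ)) =
      q ^ (2 * ∑ m ∈ Finset.range (d + 1), (t m : ℤ) ^ 2 - ∑ m ∈ Finset.Ico j (d + 1), (t m : ℤ)) /
        ((∏ m ∈ Finset.range d, qPoch (q ^ 2) (q ^ 2) (t m - t (m + 1))) *
          qPoch q q (2 * t d)) := by
  have hgap : ∏ m : Fin d, invQFactorial (q ^ 2) ((t m : ℤ) - t (m + 1)) =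
      (∏ m ∈ Finset.range d, qPoch (q ^ 2) (q ^ 2) (t m - t (m + 1)))⁻¹ := by
    rw [← Finset.prod_inv_distrib, Finset.prod_range]
    refine Finset.prod_congr rfl fun m _ ↦ ?_
    have ht : t (m + 1) ≤ t m := by
      simpa only [hst, Fin.val_succ, Fin.val_castSucc] using hs (Fin.castSucc_lt_succ (i := m)).le
    rw [← Nat.cast_sub ht, invQFactorial_natCast]
  have hlast : thetaBeta q 1 (t d) = (qPoch q q (2 * t d))⁻¹ := by
    rw [thetaBeta_one hq0 hq, ← invQFactorial_natCast, Nat.cast_mul, Nat.cast_two]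
  simp only [chainTerm, hst, Fin.val_castSucc, Fin.val_succ, Fin.val_last, hgap, hlast]
  rw [← Finset.prod_range (fun m ↦ chainWeight q j m (t m)), prod_range_chainWeight hq0,
    div_eq_mul_inv, mul_inv, mul_assoc]

end ChainWeight

/-- Proposition 4.2 (with `q` replaced by `q²`).  The tuple `s` encodes
`s_1 ≥ s_2 ≥ ⋯ ≥ s_{k-1} ≥ 0` via `s_m = t (m-1)`; the exponent of `q` is an integer. -/
theorem proposition_4_2 (q : ℂ) (h0 : 0 < ‖q‖) (h1 : ‖q‖ < 1)
    (k i : ℕ) (hk : 2 ≤ k) (hi1 : 1 ≤ i) (hik : i ≤ k) :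
    (∑' s : {s : Fin (k - 1) → ℕ // Antitone s},
      (let t : ℕ → ℕ := fun m => if h : m < k - 1 then s.1 ⟨m, h⟩ else 0
       q ^ (2 * ∑ m ∈ Finset.range (k - 1), ((t m : ℤ)) ^ 2 -
            ∑ m ∈ Finset.Ico (i - 1) (k - 1), (t m : ℤ)) /
         ((∏ m ∈ Finset.range (k - 2), qPoch (q ^ 2) (q ^ 2) (t m - t (m + 1))) *
           qPoch q q (2 * t (k - 2))))) =
      qPochInf (q ^ (4 * i)) (q ^ (4 * i)) * qPochInf (-(q ^ (2 * i - 1))) (q ^ (4 * i)) *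
        qPochInf (-(q ^ (2 * i + 1))) (q ^ (4 * i)) / qPochInf (q ^ 2) (q ^ 2) := by
  have hq0 : q ≠ 0 := norm_pos_iff.1 h0
  have hq := not_isOfFinOrder_of_norm_lt_one h1
  obtain ⟨d, rfl⟩ : ∃ d, k = d + 2 := ⟨k - 2, by lia⟩
  rw [← tsum_thetaTerm_pow_self hq0 h1 hi1, ← Nat.sub_add_cancel hi1,
    ← tsum_chainTerm_chainWeight hq0 h1 (show i - 1 ≤ d + 1 by lia),
    ← tsum_chainTerm_natCast fun x ↦ thetaBeta_one_of_neg hq0 hq]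
  exact tsum_congr fun s ↦
    (chainTerm_chainWeight_natCast hq0 hq (i - 1) s.2 fun m ↦ by simp [m.is_le.not_gt]).symm
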